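/- (Theorem 5, invariance and homogeneity part) Suppose n is odd, λ = 1/2, and p ≥ 1, and define Z_p(φ,ψ) = T_p(C^{1/2}_p(S_p φ, S_p ψ)). Then Z_p is infinitesimally sl_{n+1}(ℝ)-invariant: {μ, Z_p(φ,ψ)} = Z_p({μ,φ}, ψ) + Z_p(φ, {μ,ψ}) for every momentum function μ ∈ M and all φ, ψ ∈ A. Moreover Z_p has total homogeneous degree −p: for φ ∈ A^j and ψ ∈ A^k, Z_p(φ,ψ) ∈ A^{j+k−p}. -/

import Mathlib

open MvPolynomial

/-- The polynomial symbol algebra `A = ℂ[u₁,…,uₙ,ξ₁,…,ξₙ]`: variables `Sum.inl i` are the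
`uᵢ` and variables `Sum.inr i` are the `ξᵢ`. -/
abbrev PolA (n : ℕ) := MvPolynomial (Fin n ⊕ Fin n) ℂ

namespace LO

/-- ξ-degree of a monomial exponent. -/
def xiDeg {n : ℕ} (d : (Fin n ⊕ Fin n) →₀ ℕ) : ℕ :=
  ∑ i : Fin n, d (Sum.inr i)

/-- `c(E)`: the operator multiplying the ξ-degree-`m` component by `c m`. -/
noncomputable def cE {n : ℕ} (c : ℕ → ℂ) (φ : PolA n) : PolA n :=
  ∑ d ∈ φ.support, monomial d (c (xiDeg d) * coeff d φ)

/-- `D = Σᵢ ∂²/∂uᵢ∂ξᵢ`. -/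
noncomputable def Dop {n : ℕ} (φ : PolA n) : PolA n :=
  ∑ i : Fin n, pderiv (Sum.inl i) (pderiv (Sum.inr i) φ)

/-- The scalar `h^λ_d(m)`. -/
noncomputable def hScal (n : ℕ) (lam : ℂ) (d m : ℕ) : ℂ :=
  (d.factorial : ℂ)⁻¹ *
    ∏ j ∈ Finset.range d,
      ((m : ℂ) + (j : ℂ) + lam * ((n : ℂ) + 1)) /
        (2 * (m : ℂ) + (j : ℂ) + (n : ℂ) + (d : ℂ))

/-- The scalar `g^λ_d(m)`. -/
noncomputable def gScal (n : ℕ) (lam : ℂ) (d m : ℕ) : ℂ :=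
  (d.factorial : ℂ)⁻¹ *
    ∏ j ∈ Finset.range d,
      (-(m : ℂ) - (j : ℂ) - lam * ((n : ℂ) + 1)) /
        (2 * (m : ℂ) + (j : ℂ) + (n : ℂ) + 1)

/-- `bh^λ_d = h^λ_d(E) ∘ D^d` (equal to the identity for `d = 0`). -/
noncomputable def bh {n : ℕ} (lam : ℂ) (d : ℕ) (φ : PolA n) : PolA n :=
  cE (hScal n lam d) (Dop^[d] φ)

/-- `bg^λ_d = g^λ_d(E) ∘ D^d` (equal to the identity for `d = 0`). -/
noncomputable def bg {n : ℕ} (lam : ℂ) (d : ℕ) (φ : PolA n) : PolA n :=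
  cE (gScal n lam d) (Dop^[d] φ)

/-- `N_k(φ,ψ) = (1/k!) Σ_{α ∈ {1,…,n}^k} ∂^kφ/∂ξ_α · ∂^kψ/∂u_α`. -/
noncomputable def Nop {n : ℕ} (k : ℕ) (φ ψ : PolA n) : PolA n :=
  (k.factorial : ℂ)⁻¹ •
    ∑ α : Fin k → Fin n,
      ((List.ofFn α).foldr (fun i acc => pderiv (Sum.inr i) acc) φ) *
      ((List.ofFn α).foldr (fun i acc => pderiv (Sum.inl i) acc) ψ)

/-- The coefficient `C^λ_p` of the Lecomte–Ovsienko star product. -/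
noncomputable def C (n : ℕ) (lam : ℂ) (p : ℕ) (φ ψ : PolA n) : PolA n :=
  ∑ i ∈ Finset.range (p + 1), ∑ j ∈ Finset.range (p + 1),
    ∑ k ∈ Finset.range (p + 1), ∑ m ∈ Finset.range (p + 1),
      if i + j + k + m = p then bg lam m (Nop k (bh lam i φ) (bh lam j ψ)) else 0

/-- The Poisson bracket `{φ,ψ}`. -/
noncomputable def pb {n : ℕ} (φ ψ : PolA n) : PolA n :=
  ∑ i : Fin n,
    (pderiv (Sum.inr i) φ * pderiv (Sum.inl i) ψ
      - pderiv (Sum.inl i) φ * pderiv (Sum.inr i) ψ)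

/-- `φ ∈ A^m` (ξ-homogeneous of degree `m`; for `m < 0` this forces `φ = 0`). -/
def IsXiHomog {n : ℕ} (m : ℤ) (φ : PolA n) : Prop :=
  ∀ d ∈ φ.support, (xiDeg d : ℤ) = m

/-- The set of spanning momentum functions of the projective `sl_{n+1}(ℝ)`-action. -/
noncomputable def momSet (n : ℕ) : Set (PolA n) :=
  (Set.range fun i : Fin n => (X (Sum.inr i) : PolA n)) ∪
  (Set.range fun ij : Fin n × Fin n =>
    (X (Sum.inl ij.1) * X (Sum.inr ij.2) : PolA n)) ∪
  (Set.range fun i : Fin n =>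
    (X (Sum.inl i) * ∑ k : Fin n, X (Sum.inl k) * X (Sum.inr k) : PolA n))

/-- The span `M` of the momentum functions. -/
noncomputable def momSpan (n : ℕ) : Submodule ℂ (PolA n) := Submodule.span ℂ (momSet n)

/-- The Weyl algebra `W` of differential operators with polynomial coefficients,
as a subalgebra of `End_ℂ(A)`. -/
noncomputable def Weyl (n : ℕ) : Subalgebra ℂ (Module.End ℂ (PolA n)) :=
  Algebra.adjoin ℂ
    ((Set.range fun i : Fin n =>
        (LinearMap.mulLeft ℂ (X (Sum.inl i)) : Module.End ℂ (PolA n))) ∪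
     (Set.range fun i : Fin n =>
        (LinearMap.mulLeft ℂ (X (Sum.inr i)) : Module.End ℂ (PolA n))) ∪
     (Set.range fun v : Fin n ⊕ Fin n =>
        ((pderiv v).toLinearMap : Module.End ℂ (PolA n))))

/-- A bilinear map `B : A × A → A` is bidifferential if it is a finite sum
`B(φ,ψ) = Σ_α A_α(φ)·B_α(ψ)` with `A_α, B_α` in the Weyl algebra. -/
def Bidiff (n : ℕ) (B : PolA n → PolA n → PolA n) : Prop :=
  ∃ (N : ℕ) (Aop Bop : Fin N → Weyl n),
    ∀ φ ψ : PolA n,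
      B φ ψ = ∑ α : Fin N,
        (Aop α : Module.End ℂ (PolA n)) φ * (Bop α : Module.End ℂ (PolA n)) ψ

/-- The scalar by which `T_p = ∏_{i=1}^{⌊p/2⌋}(E'+i)` acts on `A^m`. -/
noncomputable def TScal (n p m : ℕ) : ℂ :=
  ∏ i ∈ Finset.Icc 1 (p / 2), ((m : ℂ) + (n : ℂ) / 2 + (i : ℂ))

/-- The scalar by which `S_p = ∏_{i=1}^{⌊p/2⌋}(E'−i)` acts on `A^m`. -/
noncomputable def SScal (n p m : ℕ) : ℂ :=
  ∏ i ∈ Finset.Icc 1 (p / 2), ((m : ℂ) + (n : ℂ) / 2 - (i : ℂ))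

/-- The operator `T_p`. -/
noncomputable def Tp (n p : ℕ) : PolA n → PolA n := cE (TScal n p)

/-- The operator `S_p`. -/
noncomputable def Sp (n p : ℕ) : PolA n → PolA n := cE (SScal n p)

/-- The fiberwise Euler operator `E = Σ ξᵢ ∂/∂ξᵢ` as an endomorphism. -/
noncomputable def Elin (n : ℕ) : Module.End ℂ (PolA n) :=
  ∑ i : Fin n,
    (LinearMap.mulLeft ℂ (X (Sum.inr i)) : Module.End ℂ (PolA n)) ∘ₗ
      (pderiv (Sum.inr i)).toLinearMap

/-- `E' = E + n/2` as an endomorphism. -/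
noncomputable def E'lin (n : ℕ) : Module.End ℂ (PolA n) :=
  Elin n + ((n : ℂ) / 2) • 1

/-- `D` as an endomorphism. -/
noncomputable def Dlin (n : ℕ) : Module.End ℂ (PolA n) :=
  ∑ i : Fin n,
    ((pderiv (Sum.inl i)).toLinearMap : Module.End ℂ (PolA n)) ∘ₗ
      (pderiv (Sum.inr i)).toLinearMap

/-- `L^{(m)} = −(1/16)(ξ_m∘D − 2E'∘∂/∂u_m)∘D`. -/
noncomputable def Lop (n : ℕ) (m : Fin n) : Module.End ℂ (PolA n) :=
  (-(1 / 16 : ℂ)) •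
    (((LinearMap.mulLeft ℂ (X (Sum.inr m)) : Module.End ℂ (PolA n)) ∘ₗ Dlin n
        - (2 : ℂ) • (E'lin n ∘ₗ (pderiv (Sum.inl m)).toLinearMap)) ∘ₗ Dlin n)

end LO

/-!
The `C^λ_p` are the coefficients in `ħ` of the product `φ ⋆ ψ = g (N (h φ, h ψ))`, where
`N = ∑ ħᵏ N_k`, `h = ∑ ħᵈ bh^λ_d` and `g = ∑ ħᵈ bg^λ_d`. Let `L = {μ, ·}` for one of the spanning
momentum functions `μ`. Then `h ∘ L = (L + ħK) ∘ h` and `L ∘ g = g ∘ (L + ħK)` for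
`K = -(E + λ(n + 1)) ∘ η`, with `η = 0` if `μ` is at most linear in `u` and `η = ∂/∂ξ_a` if
`μ = u_a ∑ₖ uₖ ξₖ`, and `L + ħK` is a derivation of `N`. Hence `L` is a derivation of `⋆` and of
every `C^λ_p`. As `L` preserves the degree in `ξ`, it commutes with all functions of `E`, in
particular with `T_p` and `S_p`.
-/

namespace LO

section FormalDeformation

open Finset Finset.HasAntidiagonal

variable {R U V : Type*} [CommRing R] [AddCommGroup U] [AddCommGroup V] [Module R U] [Module R V]

/-- Multiplication by the formal parameter `ħ` on formal series `∑ fₖ ħᵏ`, which are encoded by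
their sequences of coefficients. -/
def shift : (ℕ → V) →+ (ℕ → V) where
  toFun f
    | 0 => 0
    | k + 1 => f k
  map_zero' := by funext k; cases k <;> rfl
  map_add' f g := by
    funext k
    cases k with
    | zero => exact (add_zero 0).symm
    | succ k => rfl

@[simp]
theorem shift_zero_index (f : ℕ → V) : shift f 0 = 0 := rfl

@[simp]
theorem shift_succ_index (f : ℕ → V) (k : ℕ) : shift f (k + 1) = f k := rfl

theorem map_shift {F : Type*} [FunLike F U V] [ZeroHomClass F U V] (φ : F) (f : ℕ → U) (k : ℕ) :
    φ (shift f k) = shift (fun i => φ (f i)) k := by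
  cases k <;> simp

theorem shift_linearMap_apply (F : ℕ → U →ₗ[R] V) (x : U) (k : ℕ) :
    shift F k x = shift (fun i => F i x) k :=
  map_shift (LinearMap.applyₗ (R := R) x) F k

/-- The `ħ`-linear action of a formal series of linear maps on a formal series of vectors. -/
def formalApply : (ℕ → U →ₗ[R] V) →ₗ[R] (ℕ → U) →ₗ[R] (ℕ → V) :=
  LinearMap.mk₂ R (fun F f q => ∑ x ∈ antidiagonal q, F x.1 (f x.2))
    (fun _ _ _ => funext fun _ => by simp [sum_add_distrib])
    (fun _ _ _ => funext fun _ => by simp [smul_sum])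
    (fun _ _ _ => funext fun _ => by simp [sum_add_distrib])
    (fun _ _ _ => funext fun _ => by simp [smul_sum])

theorem formalApply_apply (F : ℕ → U →ₗ[R] V) (f : ℕ → U) (q : ℕ) :
    formalApply F f q = ∑ x ∈ antidiagonal q, F x.1 (f x.2) := rfl

theorem formalApply_shift_left (F : ℕ → U →ₗ[R] V) (f : ℕ → U) :
    formalApply (shift F) f = shift (formalApply F f) := by
  funext q
  cases q with
  | zero => simp [formalApply_apply]
  | succ q => simp [formalApply_apply, Nat.sum_antidiagonal_succ]

theorem formalApply_shift_right (F : ℕ → U →ₗ[R] V) (f : ℕ → U) :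
    formalApply F (shift f) = shift (formalApply F f) := by
  funext q
  cases q with
  | zero => simp [formalApply_apply]
  | succ q => simp [formalApply_apply, Nat.sum_antidiagonal_succ']

/-- The action `F ↦ B ∘ F - F ∘ A` on linear maps induced by endomorphisms `A` of the source and
`B` of the target. -/
def homAction (A : Module.End R U) (B : Module.End R V) : Module.End R (U →ₗ[R] V) :=
  LinearMap.llcomp R U V V B - LinearMap.lcomp R V A

theorem homAction_apply (A : Module.End R U) (B : Module.End R V) (F : U →ₗ[R] V) (x : U) :
    homAction A B F x = B (F x) - F (A x) := rfl

/-- The action of the formal operator `L + ħK` on formal series. -/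
def deform (L K : Module.End R V) (f : ℕ → V) : ℕ → V :=
  L.compLeft ℕ f + shift (K.compLeft ℕ f)

theorem deform_apply (L K : Module.End R V) (f : ℕ → V) (k : ℕ) :
    deform L K f k = L (f k) + K (shift f k) := by
  rw [map_shift]
  rfl

theorem deform_zero_right (L : Module.End R V) (f : ℕ → V) : deform L 0 f = L.compLeft ℕ f := by
  funext k
  simp [deform_apply]

theorem compLeft_formalApply (A : Module.End R U) (B : Module.End R V) (F : ℕ → U →ₗ[R] V)
    (f : ℕ → U) :
    B.compLeft ℕ (formalApply F f) =
      formalApply ((homAction A B).compLeft ℕ F) f + formalApply F (A.compLeft ℕ f) := by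
  funext q
  simp [formalApply_apply, homAction_apply]

theorem deform_formalApply (L K : Module.End R U) (L' K' : Module.End R V) (F : ℕ → U →ₗ[R] V)
    (f : ℕ → U) :
    deform L' K' (formalApply F f) =
      formalApply (deform (homAction L L') (homAction K K') F) f +
        formalApply F (deform L K f) := by
  simp only [deform, compLeft_formalApply L L', compLeft_formalApply K K', map_add,
    LinearMap.add_apply, formalApply_shift_left, formalApply_shift_right]
  abel

/-- The product `(φ, ψ) ↦ g (N (h φ, h ψ))` obtained from a formal bilinear product `N` by formal
changes of variables `h` on the factors and `g` on the result. -/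
def transportedProduct (g h : ℕ → Module.End R V) (N : ℕ → V →ₗ[R] V →ₗ[R] V) :
    V →ₗ[R] V →ₗ[R] (ℕ → V) :=
  ((formalApply ∘ₗ formalApply N).compl₁₂ (LinearMap.pi h) (LinearMap.pi h)).compr₂ (formalApply g)

theorem transportedProduct_apply (g h : ℕ → Module.End R V) (N : ℕ → V →ₗ[R] V →ₗ[R] V)
    (φ ψ : V) :
    transportedProduct g h N φ ψ =
      formalApply g (formalApply (formalApply N (LinearMap.pi h φ)) (LinearMap.pi h ψ)) := rfl

theorem transportedProduct_leibniz {L K : Module.End R V} {g h : ℕ → Module.End R V}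
    {N : ℕ → V →ₗ[R] V →ₗ[R] V}
    (hg : ∀ k x, L (g k x) = g k (L x) + shift g k (K x))
    (hh : ∀ k x, h k (L x) = L (h k x) + K (shift h k x))
    (hN : ∀ k x y, L (N k x y) + K (shift N k x y) =
      N k (L x) y + N k x (L y) + (shift N k (K x) y + shift N k x (K y)))
    (φ ψ : V) (p : ℕ) :
    L (transportedProduct g h N φ ψ p) =
      transportedProduct g h N (L φ) ψ p + transportedProduct g h N φ (L ψ) p := by
  have g_intertwines : deform (homAction L L) (homAction K 0) g = 0 := by
    ext k x
    simp [deform_apply, homAction_apply, hg]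
  have N_intertwines :
      deform (homAction L (homAction L L)) (homAction K (homAction K K)) N = 0 := by
    ext k x y
    simp only [deform_apply, homAction_apply, LinearMap.add_apply, LinearMap.sub_apply,
      Pi.zero_apply, LinearMap.zero_apply]
    rw [← sub_eq_zero.2 (hN k x y), shift_linearMap_apply, shift_linearMap_apply]
    simp only [map_shift]
    abel
  have h_intertwines (x : V) : LinearMap.pi h (L x) = deform L K (LinearMap.pi h x) := by
    funext k
    rw [LinearMap.pi_apply, hh, deform_apply, shift_linearMap_apply]
    rfl
  have g_leibniz (f : ℕ → V) : L.compLeft ℕ (formalApply g f) = formalApply g (deform L K f) := by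
    have := deform_formalApply L K L 0 g f
    rwa [deform_zero_right, g_intertwines, map_zero, LinearMap.zero_apply, zero_add] at this
  have N_leibniz (f₁ f₂ : ℕ → V) :
      deform L K (formalApply (formalApply N f₁) f₂) =
        formalApply (formalApply N (deform L K f₁)) f₂ +
          formalApply (formalApply N f₁) (deform L K f₂) := by
    rw [deform_formalApply L K, deform_formalApply L K, N_intertwines]
    simp
  have product_leibniz := congrFun
    (g_leibniz (formalApply (formalApply N (LinearMap.pi h φ)) (LinearMap.pi h ψ))) p
  simpa [transportedProduct_apply, N_leibniz, h_intertwines] using product_leibniz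

end FormalDeformation

section Contraction

variable {R K σ ι : Type*} [CommRing R] [Field K]

theorem pderiv_pderiv_comm (v w : σ) (φ : MvPolynomial σ R) :
    pderiv v (pderiv w φ) = pderiv w (pderiv v φ) := by
  have lie_eq_zero : ⁅pderiv (R := R) v, pderiv (R := R) w⁆ = 0 := by
    classical
    refine derivation_ext fun i => ?_
    simp [Derivation.commutator_apply, pderiv_X, Pi.single_apply, apply_ite]
  simpa [Derivation.commutator_apply, sub_eq_zero] using congr($lie_eq_zero φ)

theorem pderiv_X_mul [DecidableEq σ] (v w : σ) (φ : MvPolynomial σ R) :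
    pderiv v (X w * φ) = X w * pderiv v φ + (if v = w then 1 else 0 : R) • φ := by
  rw [Derivation.leibniz, pderiv_X, smul_eq_mul, smul_eq_mul, Pi.single_apply]
  obtain rfl | hvw := eq_or_ne v w
  · simp
  · simp [hvw, hvw.symm]

theorem foldr_pderiv_pderiv (a : ι → σ) (v : σ) (l : List ι) (φ : MvPolynomial σ R) :
    l.foldr (fun i acc => pderiv (a i) acc) (pderiv v φ) =
      pderiv v (l.foldr (fun i acc => pderiv (a i) acc) φ) := by
  induction l with
  | nil => rfl
  | cons i l ih => rw [List.foldr_cons, List.foldr_cons, ih, pderiv_pderiv_comm]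

variable [Fintype ι]

/-- The bidifferential operators `(1/k!) m ∘ (∑ᵢ ∂_{a i} ⊗ ∂_{b i})ᵏ`, where `m` is the
multiplication: the coefficients of the star product `exp(ħ ∑ᵢ ∂_{a i} ⊗ ∂_{b i})`. -/
noncomputable def contraction (a b : ι → σ) :
    ℕ → MvPolynomial σ K →ₗ[K] MvPolynomial σ K →ₗ[K] MvPolynomial σ K
  | 0 => LinearMap.mul K (MvPolynomial σ K)
  | k + 1 => ((k + 1 : ℕ) : K)⁻¹ • ∑ i,
      (contraction a b k).compl₁₂ (pderiv (a i)).toLinearMap (pderiv (b i)).toLinearMap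

variable (a b : ι → σ)

@[simp]
theorem contraction_zero (φ ψ : MvPolynomial σ K) : contraction a b 0 φ ψ = φ * ψ := rfl

theorem contraction_succ (k : ℕ) (φ ψ : MvPolynomial σ K) :
    contraction a b (k + 1) φ ψ =
      ((k + 1 : ℕ) : K)⁻¹ • ∑ i, contraction a b k (pderiv (a i) φ) (pderiv (b i) ψ) := by
  simp [contraction]

theorem contraction_eq_sum_foldr (k : ℕ) (φ ψ : MvPolynomial σ K) :
    contraction a b k φ ψ = (k.factorial : K)⁻¹ • ∑ α : Fin k → ι,
      (List.ofFn α).foldr (fun i acc => pderiv (a i) acc) φ *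
        (List.ofFn α).foldr (fun i acc => pderiv (b i) acc) ψ := by
  induction k generalizing φ ψ with
  | zero => simp
  | succ k ih =>
    rw [contraction_succ, ← (Fin.consEquiv fun _ => ι).sum_comp, Fintype.sum_prod_type,
      Nat.factorial_succ, Nat.cast_mul, mul_inv, mul_smul, Finset.smul_sum (r := (_ : K)⁻¹)]
    simp only [ih, foldr_pderiv_pderiv, Fin.consEquiv, Equiv.coe_fn_mk, List.ofFn_cons,
      List.foldr_cons, Finset.smul_sum]

theorem contraction_swap (k : ℕ) (φ ψ : MvPolynomial σ K) :
    contraction a b k φ ψ = contraction b a k ψ φ := by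
  induction k generalizing φ ψ with
  | zero => exact mul_comm φ ψ
  | succ k ih => simp only [contraction_succ, ih]

theorem pderiv_contraction (v : σ) (k : ℕ) (φ ψ : MvPolynomial σ K) :
    pderiv v (contraction a b k φ ψ) =
      contraction a b k (pderiv v φ) ψ + contraction a b k φ (pderiv v ψ) := by
  induction k generalizing φ ψ with
  | zero => simp only [contraction_zero, Derivation.leibniz, smul_eq_mul]; ring
  | succ k ih =>
    simp only [contraction_succ, Derivation.map_smul, map_sum, ih, pderiv_pderiv_comm v,
      Finset.sum_add_distrib, smul_add]

variable [CharZero K]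

theorem natCast_smul_contraction (k : ℕ) (φ ψ : MvPolynomial σ K) :
    (k : K) • contraction a b k φ ψ =
      ∑ i, shift (contraction a b) k (pderiv (a i) φ) (pderiv (b i) ψ) := by
  cases k with
  | zero => simp
  | succ k => simp only [contraction_succ, shift_succ_index,
      smul_inv_smul₀ (Nat.cast_ne_zero.2 k.succ_ne_zero : ((k + 1 : ℕ) : K) ≠ 0)]

theorem contraction_X_mul_right [DecidableEq σ] (k : ℕ) (v : σ) (φ ψ : MvPolynomial σ K) :
    contraction a b k φ (X v * ψ) = X v * contraction a b k φ ψ +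
      ∑ i, (if b i = v then 1 else 0 : K) • shift (contraction a b) k (pderiv (a i) φ) ψ := by
  induction k generalizing φ ψ with
  | zero => simp [mul_left_comm]
  | succ k ih =>
    have hk : ((k + 1 : ℕ) : K) ≠ 0 := Nat.cast_ne_zero.2 k.succ_ne_zero
    rw [← smul_right_inj hk]
    simp only [contraction_succ, smul_add, smul_inv_smul₀ hk, mul_smul_comm, shift_succ_index,
      pderiv_X_mul, map_add, map_smul, ih, Finset.sum_add_distrib, Finset.mul_sum]
    have second_order : ∑ i, ∑ j, (if b j = v then 1 else 0 : K) •
          shift (contraction a b) k (pderiv (a j) (pderiv (a i) φ)) (pderiv (b i) ψ) =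
        (k : K) • ∑ j, (if b j = v then 1 else 0 : K) • contraction a b k (pderiv (a j) φ) ψ := by
      rw [Finset.sum_comm, Finset.smul_sum]
      refine Finset.sum_congr rfl fun j _ => ?_
      rw [smul_comm, natCast_smul_contraction, Finset.smul_sum]
      simp only [pderiv_pderiv_comm (a j)]
    rw [second_order]
    push_cast
    module

theorem contraction_X_mul_left [DecidableEq σ] (k : ℕ) (v : σ) (φ ψ : MvPolynomial σ K) :
    contraction a b k (X v * φ) ψ = X v * contraction a b k φ ψ +
      ∑ i, (if a i = v then 1 else 0 : K) • shift (contraction a b) k φ (pderiv (b i) ψ) := by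
  have shift_swap (φ ψ : MvPolynomial σ K) :
      shift (contraction b a) k ψ φ = shift (contraction a b) k φ ψ := by
    cases k with
    | zero => rfl
    | succ k => exact contraction_swap b a k ψ φ
  rw [contraction_swap, contraction_X_mul_right, contraction_swap b a]
  simp only [shift_swap]

end Contraction

variable {n : ℕ}

section EulerCalculus

theorem coeff_cE (c : ℕ → ℂ) (φ : PolA n) (d : (Fin n ⊕ Fin n) →₀ ℕ) :
    coeff d (cE c φ) = c (xiDeg d) * coeff d φ := by
  classical
  simp only [cE, coeff_sum, coeff_monomial, Finset.sum_ite_eq']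
  split_ifs with hd
  · rfl
  · rw [notMem_support_iff.mp hd, mul_zero]

/-- The operator `c(E)` of `cE` as an endomorphism. -/
noncomputable def cElin (c : ℕ → ℂ) : Module.End ℂ (PolA n) where
  toFun := cE c
  map_add' φ ψ := by ext d; simp only [coeff_cE, coeff_add, mul_add]
  map_smul' r φ := by
    ext d
    simp only [coeff_cE, coeff_smul, RingHom.id_apply, smul_eq_mul, mul_left_comm]

@[simp]
theorem cElin_apply (c : ℕ → ℂ) (φ : PolA n) : cElin c φ = cE c φ := rfl

theorem cE_cE (c c' : ℕ → ℂ) (φ : PolA n) : cE c (cE c' φ) = cE (fun m => c m * c' m) φ := by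
  ext d
  simp only [coeff_cE, mul_assoc]

theorem cE_add_fun (c c' : ℕ → ℂ) (φ : PolA n) :
    cE (fun m => c m + c' m) φ = cE c φ + cE c' φ := by
  ext d
  simp only [coeff_cE, coeff_add, add_mul]

theorem cE_mul_fun (r : ℂ) (c : ℕ → ℂ) (φ : PolA n) : cE (fun m => r * c m) φ = r • cE c φ := by
  ext d
  simp only [coeff_cE, coeff_smul, smul_eq_mul, mul_assoc]

theorem cE_eq_smul {c : ℕ → ℂ} {r : ℂ} {φ : PolA n} (h : ∀ d ∈ φ.support, c (xiDeg d) = r) :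
    cE c φ = r • φ := by
  ext d
  rw [coeff_cE, coeff_smul, smul_eq_mul]
  by_cases hd : d ∈ φ.support
  · rw [h d hd]
  · rw [notMem_support_iff.mp hd, mul_zero, mul_zero]

theorem cE_const (r : ℂ) (φ : PolA n) : cE (fun _ => r) φ = r • φ :=
  cE_eq_smul fun _ _ => rfl

theorem cE_monomial (c : ℕ → ℂ) (d : (Fin n ⊕ Fin n) →₀ ℕ) (r : ℂ) :
    cE c (monomial d r) = c (xiDeg d) • monomial d r :=
  cE_eq_smul fun e he => by rw [Finset.mem_singleton.mp (support_monomial_subset he)]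

theorem cE_natCast_eq_Elin (φ : PolA n) : cE (fun m => (m : ℂ)) φ = Elin n φ := by
  suffices h : cElin (fun m => (m : ℂ)) = Elin n from congr($h φ)
  refine linearMap_ext fun d => LinearMap.ext fun r => ?_
  simp [Elin, cE_monomial, -pderiv_monomial, X_mul_pderiv_monomial, ← Finset.sum_smul, xiDeg,
    ← Nat.cast_smul_eq_nsmul ℂ]

end EulerCalculus

section XiDegree

/-- The weights of the variables for which the weighted degree is the degree in `ξ`. -/
def xiWeight (n : ℕ) : Fin n ⊕ Fin n → ℤ := Sum.elim 0 1

theorem isXiHomog_iff {m : ℤ} {φ : PolA n} :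
    IsXiHomog m φ ↔ IsWeightedHomogeneous (xiWeight n) φ m := by
  simp [IsXiHomog, IsWeightedHomogeneous, Finsupp.weight_apply, Finsupp.sum_fintype, xiWeight,
    xiDeg]

theorem isXiHomog_monomial (d : (Fin n ⊕ Fin n) →₀ ℕ) (r : ℂ) :
    IsXiHomog (xiDeg d) (monomial d r) := fun e he => by
  rw [Finset.mem_singleton.mp (support_monomial_subset he)]

theorem IsXiHomog.sum {ι : Type*} {s : Finset ι} {f : ι → PolA n} {m : ℤ}
    (h : ∀ i ∈ s, IsXiHomog m (f i)) : IsXiHomog m (∑ i ∈ s, f i) :=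
  isXiHomog_iff.2 <| .sum s f m fun i hi => isXiHomog_iff.1 (h i hi)

theorem IsXiHomog.sub {m : ℤ} {φ ψ : PolA n} (hφ : IsXiHomog m φ) (hψ : IsXiHomog m ψ) :
    IsXiHomog m (φ - ψ) :=
  isXiHomog_iff.2 <| (isXiHomog_iff.1 hφ).sub (isXiHomog_iff.1 hψ)

theorem IsXiHomog.mul {a b : ℤ} {φ ψ : PolA n} (hφ : IsXiHomog a φ) (hψ : IsXiHomog b ψ) :
    IsXiHomog (a + b) (φ * ψ) :=
  isXiHomog_iff.2 <| (isXiHomog_iff.1 hφ).mul (isXiHomog_iff.1 hψ)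

theorem IsXiHomog.cE {m : ℤ} {φ : PolA n} (h : IsXiHomog m φ) (c : ℕ → ℂ) :
    IsXiHomog m (cE c φ) := fun d hd =>
  h d <| by
    rw [mem_support_iff, coeff_cE] at hd
    exact mem_support_iff.2 (right_ne_zero_of_mul hd)

theorem IsXiHomog.pderiv_inl {m : ℤ} {φ : PolA n} (h : IsXiHomog m φ) (i : Fin n) :
    IsXiHomog m (pderiv (Sum.inl i) φ) :=
  isXiHomog_iff.2 <| (isXiHomog_iff.1 h).pderiv (add_zero m)

theorem IsXiHomog.pderiv_inr {m : ℤ} {φ : PolA n} (h : IsXiHomog m φ) (i : Fin n) :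
    IsXiHomog (m - 1) (pderiv (Sum.inr i) φ) :=
  isXiHomog_iff.2 <| (isXiHomog_iff.1 h).pderiv (sub_add_cancel m 1)

theorem IsXiHomog.pb {a b : ℤ} {φ ψ : PolA n} (hφ : IsXiHomog a φ) (hψ : IsXiHomog b ψ) :
    IsXiHomog (a + b - 1) (pb φ ψ) := by
  refine .sum fun i _ => .sub ?_ ?_
  · convert (hφ.pderiv_inr i).mul (hψ.pderiv_inl i) using 1
    ring
  · convert (hφ.pderiv_inl i).mul (hψ.pderiv_inr i) using 1
    ring

/-- The linear operator `F` maps `A^m` to `A^{m-k}` for every `m`. -/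
def LowersXiDegree (k : ℕ) (F : Module.End ℂ (PolA n)) : Prop :=
  ∀ ⦃m : ℤ⦄ ⦃φ : PolA n⦄, IsXiHomog m φ → IsXiHomog (m - k) (F φ)

theorem LowersXiDegree.pow {k : ℕ} {F : Module.End ℂ (PolA n)} (hF : LowersXiDegree k F) (d : ℕ) :
    LowersXiDegree (d * k) (F ^ d) := by
  intro m φ hφ
  induction d with
  | zero => simpa using hφ
  | succ d ih =>
    rw [pow_succ', Module.End.mul_apply]
    convert hF ih using 1
    push_cast
    ring

theorem LowersXiDegree.apply_cE {k : ℕ} {F : Module.End ℂ (PolA n)} (hF : LowersXiDegree k F)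
    (c : ℕ → ℂ) (φ : PolA n) : F (cE c φ) = cE (fun m => c (m + k)) (F φ) := by
  suffices h : F ∘ₗ cElin c = cElin (fun m => c (m + k)) ∘ₗ F from congr($h φ)
  refine linearMap_ext fun d => LinearMap.ext fun r => ?_
  have scalar_eq : ∀ e ∈ (F (monomial d r)).support, c (xiDeg e + k) = c (xiDeg d) := by
    intro e he
    have := hF (isXiHomog_monomial d r) e he
    congr 1
    omega
  simp only [LinearMap.comp_apply, cElin_apply, cE_monomial, map_smul]
  exact (cE_eq_smul scalar_eq).symm

theorem lowersXiDegree_pderiv_inr (i : Fin n) :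
    LowersXiDegree 1 (pderiv (Sum.inr i)).toLinearMap := fun _ _ hφ => hφ.pderiv_inr i

theorem lowersXiDegree_Dlin : LowersXiDegree 1 (Dlin n) := fun m φ hφ => by
  simpa [Dlin] using IsXiHomog.sum fun i (_ : i ∈ Finset.univ) => (hφ.pderiv_inr i).pderiv_inl i

end XiDegree

section StandardProduct

/-- The family `N_k` of `Nop` as bilinear maps. -/
noncomputable def Nlin (n : ℕ) : ℕ → PolA n →ₗ[ℂ] PolA n →ₗ[ℂ] PolA n :=
  contraction Sum.inr Sum.inl

theorem Nlin_apply (k : ℕ) (φ ψ : PolA n) : Nlin n k φ ψ = Nop k φ ψ :=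
  contraction_eq_sum_foldr Sum.inr Sum.inl k φ ψ

theorem Nlin_zero (φ ψ : PolA n) : Nlin n 0 φ ψ = φ * ψ := rfl

theorem pderiv_Nlin (v : Fin n ⊕ Fin n) (k : ℕ) (φ ψ : PolA n) :
    pderiv v (Nlin n k φ ψ) = Nlin n k (pderiv v φ) ψ + Nlin n k φ (pderiv v ψ) :=
  pderiv_contraction Sum.inr Sum.inl v k φ ψ

theorem Nlin_X_inl_mul_left (k : ℕ) (j : Fin n) (φ ψ : PolA n) :
    Nlin n k (X (Sum.inl j) * φ) ψ = X (Sum.inl j) * Nlin n k φ ψ := by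
  simp [Nlin, contraction_X_mul_left]

theorem Nlin_X_inr_mul_right (k : ℕ) (j : Fin n) (φ ψ : PolA n) :
    Nlin n k φ (X (Sum.inr j) * ψ) = X (Sum.inr j) * Nlin n k φ ψ := by
  simp [Nlin, contraction_X_mul_right]

theorem Nlin_X_inr_mul_left (k : ℕ) (j : Fin n) (φ ψ : PolA n) :
    Nlin n k (X (Sum.inr j) * φ) ψ =
      X (Sum.inr j) * Nlin n k φ ψ + shift (Nlin n) k φ (pderiv (Sum.inl j) ψ) := by
  simpa [Nlin] using contraction_X_mul_left Sum.inr Sum.inl k (Sum.inr j) φ ψ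

theorem Nlin_X_inl_mul_right (k : ℕ) (j : Fin n) (φ ψ : PolA n) :
    Nlin n k φ (X (Sum.inl j) * ψ) =
      X (Sum.inl j) * Nlin n k φ ψ + shift (Nlin n) k (pderiv (Sum.inr j) φ) ψ := by
  simpa [Nlin] using contraction_X_mul_right Sum.inr Sum.inl k (Sum.inl j) φ ψ

theorem IsXiHomog.Nlin (k : ℕ) {a b : ℤ} {φ ψ : PolA n} (hφ : IsXiHomog a φ)
    (hψ : IsXiHomog b ψ) : IsXiHomog (a + b - k) (Nlin n k φ ψ) := by
  induction k generalizing a φ ψ with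
  | zero => simpa [Nlin_zero] using hφ.mul hψ
  | succ k ih =>
    have Nlin_succ : LO.Nlin n (k + 1) φ ψ = ((k + 1 : ℕ) : ℂ)⁻¹ •
        ∑ i, LO.Nlin n k (pderiv (Sum.inr i) φ) (pderiv (Sum.inl i) ψ) :=
      contraction_succ Sum.inr Sum.inl k φ ψ
    rw [Nlin_succ, ← cE_const]
    refine (IsXiHomog.sum fun i _ => ?_).cE _
    convert ih (hφ.pderiv_inr i) (hψ.pderiv_inl i) using 1
    push_cast
    ring

end StandardProduct

section StarProduct

theorem Dop_eq_Dlin : (Dop : PolA n → PolA n) = Dlin n := by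
  funext φ
  simp [Dop, Dlin]

/-- The operator `bh^λ_d` of `bh` as an endomorphism. -/
noncomputable def bhlin (n : ℕ) (lam : ℂ) (d : ℕ) : Module.End ℂ (PolA n) :=
  cElin (hScal n lam d) ∘ₗ Dlin n ^ d

/-- The operator `bg^λ_d` of `bg` as an endomorphism. -/
noncomputable def bglin (n : ℕ) (lam : ℂ) (d : ℕ) : Module.End ℂ (PolA n) :=
  cElin (gScal n lam d) ∘ₗ Dlin n ^ d

theorem bhlin_apply (lam : ℂ) (d : ℕ) (φ : PolA n) : bhlin n lam d φ = bh lam d φ := by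
  simp [bhlin, bh, Dop_eq_Dlin, Module.End.pow_apply]

theorem bglin_apply (lam : ℂ) (d : ℕ) (φ : PolA n) : bglin n lam d φ = bg lam d φ := by
  simp [bglin, bg, Dop_eq_Dlin, Module.End.pow_apply]

theorem sum_range_ite_eq_sum_antidiagonal {M : Type*} [AddCommMonoid M] (f : ℕ → ℕ → ℕ → ℕ → M)
    (p : ℕ) :
    (∑ i ∈ Finset.range (p + 1), ∑ j ∈ Finset.range (p + 1), ∑ k ∈ Finset.range (p + 1),
      ∑ m ∈ Finset.range (p + 1), if i + j + k + m = p then f i j k m else 0) =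
    ∑ z ∈ Finset.HasAntidiagonal.antidiagonal p, ∑ y ∈ Finset.HasAntidiagonal.antidiagonal z.2,
      ∑ x ∈ Finset.HasAntidiagonal.antidiagonal y.1, f x.2 y.2 x.1 z.1 := by
  simp only [Finset.sum_sigma']
  rw [← Finset.sum_filter]
  refine Finset.sum_bij'
    (fun ⟨i, j, k, m⟩ _ => ⟨(m, i + j + k), (i + k, j), (k, i)⟩)
    (fun ⟨z, y, x⟩ _ => ⟨x.2, y.2, x.1, z.1⟩) ?_ ?_ ?_ ?_ ?_
  · rintro ⟨i, j, k, m⟩ h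
    simp only [Finset.mem_sigma, Finset.mem_filter, Finset.mem_range,
      Finset.HasAntidiagonal.mem_antidiagonal] at h ⊢
    omega
  · rintro ⟨⟨m, q⟩, ⟨r, j⟩, ⟨k, i⟩⟩ h
    simp only [Finset.mem_sigma, Finset.mem_filter, Finset.mem_range,
      Finset.HasAntidiagonal.mem_antidiagonal] at h ⊢
    omega
  · exact fun _ _ => rfl
  · rintro ⟨⟨m, q⟩, ⟨r, j⟩, ⟨k, i⟩⟩ h
    simp only [Finset.mem_sigma, Finset.HasAntidiagonal.mem_antidiagonal] at h
    obtain ⟨rfl, rfl⟩ : i + k = r ∧ i + j + k = q := by omega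
    rfl
  · exact fun _ _ => rfl

theorem C_eq_transportedProduct (lam : ℂ) (p : ℕ) (φ ψ : PolA n) :
    C n lam p φ ψ = transportedProduct (bglin n lam) (bhlin n lam) (Nlin n) φ ψ p := by
  simp only [C, ← bglin_apply, ← bhlin_apply, ← Nlin_apply]
  rw [sum_range_ite_eq_sum_antidiagonal fun i j k m =>
    bglin n lam m (Nlin n k (bhlin n lam i φ) (bhlin n lam j ψ))]
  simp [transportedProduct_apply, formalApply_apply]

theorem IsXiHomog.bh (lam : ℂ) (d : ℕ) {m : ℤ} {φ : PolA n} (h : IsXiHomog m φ) :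
    IsXiHomog (m - d) (bh lam d φ) := by
  rw [← bhlin_apply]
  simpa [bhlin] using (lowersXiDegree_Dlin.pow d h).cE (hScal n lam d)

theorem IsXiHomog.bg (lam : ℂ) (d : ℕ) {m : ℤ} {φ : PolA n} (h : IsXiHomog m φ) :
    IsXiHomog (m - d) (bg lam d φ) := by
  rw [← bglin_apply]
  simpa [bglin] using (lowersXiDegree_Dlin.pow d h).cE (gScal n lam d)

theorem IsXiHomog.C (lam : ℂ) (p : ℕ) {a b : ℤ} {φ ψ : PolA n} (hφ : IsXiHomog a φ)
    (hψ : IsXiHomog b ψ) : IsXiHomog (a + b - p) (C n lam p φ ψ) := by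
  refine .sum fun i _ => .sum fun j _ => .sum fun k _ => .sum fun m _ => ?_
  split_ifs with hp
  · rw [← Nlin_apply]
    convert (((hφ.bh lam i).Nlin k (hψ.bh lam j)).bg lam m) using 1
    rw [← hp]
    push_cast
    ring
  · simp [IsXiHomog]

end StarProduct

section Divergence

theorem Dlin_pderiv (v : Fin n ⊕ Fin n) (φ : PolA n) :
    Dlin n (pderiv v φ) = pderiv v (Dlin n φ) := by
  simp [Dlin, pderiv_pderiv_comm v]

theorem Dlin_X_inl_mul (i : Fin n) (φ : PolA n) :
    Dlin n (X (Sum.inl i) * φ) = X (Sum.inl i) * Dlin n φ + pderiv (Sum.inr i) φ := by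
  simp [Dlin, -Derivation.leibniz, pderiv_X_mul, Finset.sum_add_distrib, Finset.mul_sum]

theorem Dlin_X_inr_mul (i : Fin n) (φ : PolA n) :
    Dlin n (X (Sum.inr i) * φ) = X (Sum.inr i) * Dlin n φ + pderiv (Sum.inl i) φ := by
  simp [Dlin, -Derivation.leibniz, pderiv_X_mul, apply_ite (pderiv _), Finset.sum_add_distrib,
    Finset.mul_sum]

end Divergence

section ProjectiveSymmetry

theorem inv_factorial_succ_mul (k : ℕ) :
    ((k + 1).factorial : ℂ)⁻¹ * ((k : ℂ) + 1) = (k.factorial : ℂ)⁻¹ := by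
  have hk : (k : ℂ) + 1 ≠ 0 := Nat.cast_add_one_ne_zero k
  rw [Nat.factorial_succ, Nat.cast_mul, Nat.cast_add_one, mul_inv_rev, inv_mul_cancel_right₀ hk]

theorem hScal_succ_mul (n : ℕ) (lam : ℂ) (d m : ℕ) :
    hScal n lam (d + 1) m * (((d : ℂ) + 1) * (2 * (m : ℂ) + n + d + 1)) =
      ((m : ℂ) + lam * ((n : ℂ) + 1)) * hScal n lam d (m + 1) := by
  have denominator_ne_zero : 2 * (m : ℂ) + n + d + 1 ≠ 0 := by
    exact_mod_cast (2 * m + n + d).succ_ne_zero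
  have tail_factor (j : ℕ) : ((m : ℂ) + ((j + 1 : ℕ) : ℂ) + lam * ((n : ℂ) + 1)) /
        (2 * (m : ℂ) + ((j + 1 : ℕ) : ℂ) + (n : ℂ) + ((d + 1 : ℕ) : ℂ)) =
      (((m + 1 : ℕ) : ℂ) + (j : ℂ) + lam * ((n : ℂ) + 1)) /
        (2 * ((m + 1 : ℕ) : ℂ) + (j : ℂ) + (n : ℂ) + (d : ℂ)) := by
    push_cast
    congr 1 <;> ring
  have head_factor : ((m : ℂ) + ((0 : ℕ) : ℂ) + lam * ((n : ℂ) + 1)) /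
        (2 * (m : ℂ) + ((0 : ℕ) : ℂ) + (n : ℂ) + ((d + 1 : ℕ) : ℂ)) =
      ((m : ℂ) + lam * ((n : ℂ) + 1)) / (2 * (m : ℂ) + n + d + 1) := by
    push_cast
    congr 1 <;> ring
  simp only [hScal, Finset.prod_range_succ', tail_factor, head_factor, ← inv_factorial_succ_mul d]
  field_simp

theorem gScal_succ_mul (n : ℕ) (lam : ℂ) (d m : ℕ) :
    gScal n lam (d + 1) m * (((d : ℂ) + 1) * (2 * (m : ℂ) + n + d + 1)) =
      -gScal n lam d m * (((m + d : ℕ) : ℂ) + lam * ((n : ℂ) + 1)) := by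
  have denominator_ne_zero : 2 * (m : ℂ) + d + n + 1 ≠ 0 := by
    exact_mod_cast (2 * m + d + n).succ_ne_zero
  have last_factor : (-(m : ℂ) - d - lam * ((n : ℂ) + 1)) / (2 * (m : ℂ) + d + n + 1) *
      (2 * (m : ℂ) + n + d + 1) = -(((m + d : ℕ) : ℂ) + lam * ((n : ℂ) + 1)) := by
    rw [add_right_comm (2 * (m : ℂ)) n, div_mul_cancel₀ _ denominator_ne_zero, Nat.cast_add]
    ring
  rw [neg_mul, ← mul_neg, ← last_factor, gScal, gScal, Finset.prod_range_succ,
    ← inv_factorial_succ_mul d]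
  ring

theorem bhlin_zero_apply (lam : ℂ) (φ : PolA n) : bhlin n lam 0 φ = φ := by
  simp [bhlin, show hScal n lam 0 = fun _ => 1 by funext; simp [hScal], cE_const]

theorem bglin_zero_apply (lam : ℂ) (φ : PolA n) : bglin n lam 0 φ = φ := by
  simp [bglin, show gScal n lam 0 = fun _ => 1 by funext; simp [gScal], cE_const]

/-- The operator `K = -(E + λ(n + 1)) ∘ η`, such that `L + ħK` is the conjugate of a projective
symmetry `L` under `∑ bh^λ_d ħᵈ`, where `η` measures the failure of `L` to commute with `D`. -/
noncomputable def correction (lam : ℂ) (η : Module.End ℂ (PolA n)) : Module.End ℂ (PolA n) :=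
  -(cElin (fun m => (m : ℂ) + lam * ((n : ℂ) + 1)) ∘ₗ η)

theorem correction_apply (lam : ℂ) (η : Module.End ℂ (PolA n)) (φ : PolA n) :
    correction lam η φ = -cE (fun m => (m : ℂ) + lam * ((n : ℂ) + 1)) (η φ) := rfl

theorem correction_apply_eq_Elin (lam : ℂ) (η : Module.End ℂ (PolA n)) (φ : PolA n) :
    correction lam η φ = -(Elin n (η φ) + (lam * ((n : ℂ) + 1)) • η φ) := by
  rw [correction_apply, cE_add_fun, cE_const, cE_natCast_eq_Elin]

/-- The compatibilities of the operator `L` with `E`, `D` and the `N_k` which make `L` a derivation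
of the star product of parameter `λ`. The operator `η`, of degree `-1`, is determined by the
commutator of `D` and `L`; for the actions of momentum functions it is `0` or some `∂/∂ξ_a`. -/
structure IsProjectiveSymmetry (lam : ℂ) (L η : Module.End ℂ (PolA n)) : Prop where
  lowersXiDegree : LowersXiDegree 0 L
  lowersXiDegree_eta : LowersXiDegree 1 η
  commute_Dlin_eta : Commute (Dlin n) η
  Dlin_apply (φ : PolA n) :
    Dlin n (L φ) = L (Dlin n φ) - cE (fun m => 2 * (m : ℂ) + n + 1) (η φ)
  leibniz_Nlin (k : ℕ) (φ ψ : PolA n) :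
    L (Nlin n k φ ψ) + correction lam η (shift (Nlin n) k φ ψ) =
      Nlin n k (L φ) ψ + Nlin n k φ (L ψ) +
        (shift (Nlin n) k (correction lam η φ) ψ + shift (Nlin n) k φ (correction lam η ψ))

namespace IsProjectiveSymmetry

variable {lam : ℂ} {L η : Module.End ℂ (PolA n)}

theorem apply_cE (hL : IsProjectiveSymmetry lam L η) (c : ℕ → ℂ) (φ : PolA n) :
    L (cE c φ) = cE c (L φ) :=
  hL.lowersXiDegree.apply_cE c φ

theorem Dlin_pow_eta (hL : IsProjectiveSymmetry lam L η) (d : ℕ) (φ : PolA n) :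
    (Dlin n ^ d) (η φ) = η ((Dlin n ^ d) φ) :=
  congr($(hL.commute_Dlin_eta.pow_left d) φ)

theorem Dlin_pow_succ_apply (hL : IsProjectiveSymmetry lam L η) (d : ℕ) (φ : PolA n) :
    (Dlin n ^ (d + 1)) (L φ) = L ((Dlin n ^ (d + 1)) φ) -
      cE (fun m => ((d : ℂ) + 1) * (2 * (m : ℂ) + n + d + 1)) (η ((Dlin n ^ d) φ)) := by
  induction d with
  | zero => simp [hL.Dlin_apply]
  | succ d ih =>
    have Dlin_eta (φ : PolA n) : Dlin n (η φ) = η (Dlin n φ) := congr($hL.commute_Dlin_eta φ)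
    have Dlin_pow (e : ℕ) (φ : PolA n) : Dlin n ((Dlin n ^ e) φ) = (Dlin n ^ (e + 1)) φ := by
      rw [pow_succ', Module.End.mul_apply]
    rw [← Dlin_pow (d + 1) (L φ), ih, map_sub, hL.Dlin_apply, lowersXiDegree_Dlin.apply_cE,
      Dlin_eta, Dlin_pow, Dlin_pow, sub_sub, ← cE_add_fun]
    congr 3
    funext m
    push_cast
    ring

theorem bhlin_apply_comm (hL : IsProjectiveSymmetry lam L η) (d : ℕ) (φ : PolA n) :
    bhlin n lam d (L φ) =
      L (bhlin n lam d φ) + correction lam η (shift (bhlin n lam) d φ) := by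
  cases d with
  | zero => simp [bhlin_zero_apply]
  | succ d =>
    simp only [bhlin, shift_succ_index, LinearMap.comp_apply, hL.Dlin_pow_succ_apply, map_sub]
    simp only [cElin_apply, correction_apply, hL.apply_cE, hL.lowersXiDegree_eta.apply_cE, cE_cE,
      hScal_succ_mul, sub_eq_add_neg]

theorem apply_bglin (hL : IsProjectiveSymmetry lam L η) (d : ℕ) (φ : PolA n) :
    L (bglin n lam d φ) =
      bglin n lam d (L φ) + shift (bglin n lam) d (correction lam η φ) := by
  cases d with
  | zero => simp [bglin_zero_apply]
  | succ d =>
    have cE_neg_fun (c : ℕ → ℂ) (φ : PolA n) : cE (fun m => -c m) φ = -cE c φ := by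
      simpa using cE_mul_fun (-1) c φ
    simp only [bglin, shift_succ_index, LinearMap.comp_apply, hL.Dlin_pow_succ_apply, map_sub,
      correction_apply, map_neg, (lowersXiDegree_Dlin.pow d).apply_cE, hL.Dlin_pow_eta]
    simp only [cElin_apply, hL.apply_cE, cE_cE, gScal_succ_mul, neg_mul, cE_neg_fun, mul_one]
    abel

theorem C_leibniz (hL : IsProjectiveSymmetry lam L η) (p : ℕ) (φ ψ : PolA n) :
    L (C n lam p φ ψ) = C n lam p (L φ) ψ + C n lam p φ (L ψ) := by
  simp only [C_eq_transportedProduct]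
  exact transportedProduct_leibniz hL.apply_bglin hL.bhlin_apply_comm hL.leibniz_Nlin φ ψ p

end IsProjectiveSymmetry

end ProjectiveSymmetry

section MomentumFunctions

/-- The Poisson bracket `pb` as a bilinear map. -/
noncomputable def pblin (n : ℕ) : PolA n →ₗ[ℂ] PolA n →ₗ[ℂ] PolA n :=
  ∑ i : Fin n,
    ((LinearMap.mul ℂ (PolA n)).compl₁₂
        (pderiv (Sum.inr i)).toLinearMap (pderiv (Sum.inl i)).toLinearMap -
      (LinearMap.mul ℂ (PolA n)).compl₁₂
        (pderiv (Sum.inl i)).toLinearMap (pderiv (Sum.inr i)).toLinearMap)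

theorem pblin_apply (φ ψ : PolA n) : pblin n φ ψ = pb φ ψ := by
  simp [pblin, pb]

theorem pblin_X_inl (i : Fin n) (φ : PolA n) :
    pblin n (X (Sum.inl i)) φ = -pderiv (Sum.inr i) φ := by
  simp [pblin_apply, pb, pderiv_X, Pi.single_apply]

theorem pblin_X_inr (i : Fin n) (φ : PolA n) :
    pblin n (X (Sum.inr i)) φ = pderiv (Sum.inl i) φ := by
  simp [pblin_apply, pb, pderiv_X, Pi.single_apply]

theorem pblin_mul_left (φ ψ χ : PolA n) :
    pblin n (φ * ψ) χ = φ * pblin n ψ χ + ψ * pblin n φ χ := by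
  simp only [pblin_apply, pb, Derivation.leibniz, smul_eq_mul, Finset.mul_sum,
    ← Finset.sum_add_distrib]
  exact Finset.sum_congr rfl fun i _ => by ring

theorem pblin_linear (i j : Fin n) (φ : PolA n) :
    pblin n (X (Sum.inl i) * X (Sum.inr j)) φ =
      X (Sum.inl i) * pderiv (Sum.inl j) φ - X (Sum.inr j) * pderiv (Sum.inr i) φ := by
  rw [pblin_mul_left, pblin_X_inl, pblin_X_inr, mul_neg, sub_eq_add_neg]

theorem pblin_quadratic (a : Fin n) (φ : PolA n) :
    pblin n (X (Sum.inl a) * ∑ k, X (Sum.inl k) * X (Sum.inr k)) φ =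
      ∑ i, (X (Sum.inl a) * (X (Sum.inl i) * pderiv (Sum.inl i) φ) -
        X (Sum.inl a) * (X (Sum.inr i) * pderiv (Sum.inr i) φ) -
        X (Sum.inl i) * (X (Sum.inr i) * pderiv (Sum.inr a) φ)) := by
  simp only [pblin_mul_left, map_sum, LinearMap.sum_apply, pblin_X_inl, pblin_X_inr, mul_neg,
    Finset.sum_add_distrib, Finset.sum_neg_distrib, mul_add, Finset.mul_sum, mul_assoc,
    sub_eq_add_neg]

theorem isXiHomog_of_mem_momSpan {μ : PolA n} (hμ : μ ∈ momSpan n) : IsXiHomog 1 μ := by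
  have isXiHomog_X (v : Fin n ⊕ Fin n) : IsXiHomog (xiWeight n v) (X v : PolA n) :=
    isXiHomog_iff.2 (isWeightedHomogeneous_X ℂ _ v)
  have isXiHomog_X_mul_X (i j : Fin n) :
      IsXiHomog 1 (X (Sum.inl i) * X (Sum.inr j) : PolA n) :=
    (isXiHomog_X (Sum.inl i)).mul (isXiHomog_X (Sum.inr j))
  suffices h : momSpan n ≤ weightedHomogeneousSubmodule ℂ (xiWeight n) 1 from
    isXiHomog_iff.2 (h hμ)
  refine Submodule.span_le.2 ?_
  rintro _ ((⟨i, rfl⟩ | ⟨⟨i, j⟩, rfl⟩) | ⟨i, rfl⟩) <;> refine isXiHomog_iff.1 ?_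
  · exact isXiHomog_X (Sum.inr i)
  · exact isXiHomog_X_mul_X i j
  · exact (isXiHomog_X (Sum.inl i)).mul (.sum fun k _ => isXiHomog_X_mul_X k k)

theorem lowersXiDegree_pblin {μ : PolA n} (hμ : μ ∈ momSpan n) :
    LowersXiDegree 0 (pblin n μ) := fun m φ hφ => by
  rw [pblin_apply]
  convert (isXiHomog_of_mem_momSpan hμ).pb hφ using 1
  simp

theorem isProjectiveSymmetry_of_commute_Dlin (lam : ℂ) {L : Module.End ℂ (PolA n)}
    (hdeg : LowersXiDegree 0 L) (hD : ∀ φ, Dlin n (L φ) = L (Dlin n φ))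
    (hN : ∀ k φ ψ, L (Nlin n k φ ψ) = Nlin n k (L φ) ψ + Nlin n k φ (L ψ)) :
    IsProjectiveSymmetry lam L 0 where
  lowersXiDegree := hdeg
  lowersXiDegree_eta _ _ _ := by simp [IsXiHomog]
  commute_Dlin_eta := .zero_right _
  Dlin_apply φ := by simp [hD, ← cElin_apply]
  leibniz_Nlin k φ ψ := by simp [hN, correction]

theorem isProjectiveSymmetry_translation (lam : ℂ) (i : Fin n) :
    IsProjectiveSymmetry lam (pblin n (X (Sum.inr i))) 0 := by
  have mem_momSpan : X (Sum.inr i) ∈ momSpan n := Submodule.subset_span (.inl (.inl ⟨i, rfl⟩))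
  refine isProjectiveSymmetry_of_commute_Dlin lam (lowersXiDegree_pblin mem_momSpan)
    (fun φ => ?_) (fun k φ ψ => ?_)
  · simp only [pblin_X_inr, Dlin_pderiv]
  · simp only [pblin_X_inr, pderiv_Nlin]

theorem isProjectiveSymmetry_linear (lam : ℂ) (i j : Fin n) :
    IsProjectiveSymmetry lam (pblin n (X (Sum.inl i) * X (Sum.inr j))) 0 := by
  have mem_momSpan : X (Sum.inl i) * X (Sum.inr j) ∈ momSpan n :=
    Submodule.subset_span (.inl (.inr ⟨(i, j), rfl⟩))
  refine isProjectiveSymmetry_of_commute_Dlin lam (lowersXiDegree_pblin mem_momSpan)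
    (fun φ => ?_) (fun k φ ψ => ?_)
  · simp only [pblin_linear, map_sub, Dlin_X_inl_mul, Dlin_X_inr_mul, Dlin_pderiv,
      pderiv_pderiv_comm (Sum.inr i)]
    ring
  · simp only [pblin_linear, pderiv_Nlin, map_sub, LinearMap.sub_apply, Nlin_X_inl_mul_left,
      Nlin_X_inl_mul_right, Nlin_X_inr_mul_left, Nlin_X_inr_mul_right]
    ring

theorem Elin_apply (φ : PolA n) :
    Elin n φ = ∑ i, X (Sum.inr i) * pderiv (Sum.inr i) φ := by
  simp [Elin]

theorem Dlin_pblin_quadratic (a : Fin n) (φ : PolA n) :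
    Dlin n (pblin n (X (Sum.inl a) * ∑ k, X (Sum.inl k) * X (Sum.inr k)) φ) =
      pblin n (X (Sum.inl a) * ∑ k, X (Sum.inl k) * X (Sum.inr k)) (Dlin n φ) -
        cE (fun m => 2 * (m : ℂ) + n + 1) (pderiv (Sum.inr a) φ) := by
  have cE_eq : cE (fun m => 2 * (m : ℂ) + n + 1) (pderiv (Sum.inr a) φ) =
      (2 : ℂ) • Elin n (pderiv (Sum.inr a) φ) + ((n : ℂ) + 1) • pderiv (Sum.inr a) φ := by
    simp only [add_assoc, cE_add_fun (fun m => 2 * (m : ℂ)), cE_mul_fun, cE_const,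
      cE_natCast_eq_Elin]
  have trace_term : ((n : ℂ) + 1) • pderiv (Sum.inr a) φ = ∑ i : Fin n,
      (pderiv (Sum.inr a) φ + (if i = a then 1 else 0 : ℂ) • pderiv (Sum.inr i) φ) := by
    simp [Finset.sum_add_distrib, add_smul, ← Nat.cast_smul_eq_nsmul ℂ]
  rw [cE_eq, trace_term, Elin_apply, two_smul, ← Finset.sum_add_distrib, ← Finset.sum_add_distrib]
  simp only [pblin_quadratic, ← Finset.sum_sub_distrib, map_sum]
  refine Finset.sum_congr rfl fun i _ => ?_
  simp only [map_sub, Dlin_X_inl_mul, Dlin_X_inr_mul, Dlin_pderiv, pderiv_X_mul, Sum.inr.injEq,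
    reduceCtorEq, if_false, zero_smul, add_zero, pderiv_pderiv_comm (Sum.inr i) (Sum.inr a),
    pderiv_pderiv_comm (Sum.inr a) (Sum.inl i), pderiv_pderiv_comm (Sum.inr i) (Sum.inl i),
    if_true, one_smul, eq_comm (a := a)]
  split_ifs <;> simp <;> ring

theorem leibniz_Nlin_quadratic_summand (a i : Fin n) (k : ℕ) (φ ψ : PolA n) :
    let A (χ : PolA n) := X (Sum.inl a) * (X (Sum.inl i) * pderiv (Sum.inl i) χ) -
      X (Sum.inl a) * (X (Sum.inr i) * pderiv (Sum.inr i) χ) -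
      X (Sum.inl i) * (X (Sum.inr i) * pderiv (Sum.inr a) χ)
    let B (χ : PolA n) := X (Sum.inr i) * pderiv (Sum.inr i) (pderiv (Sum.inr a) χ)
    A (Nlin n k φ ψ) - B (shift (Nlin n) k φ ψ) =
      Nlin n k (A φ) ψ + Nlin n k φ (A ψ) -
        (shift (Nlin n) k (B φ) ψ + shift (Nlin n) k φ (B ψ)) := by
  cases k <;>
  · simp only [pderiv_Nlin, map_sub, map_add, map_zero, LinearMap.sub_apply, LinearMap.zero_apply,
      Nlin_X_inl_mul_left, Nlin_X_inl_mul_right, Nlin_X_inr_mul_left, Nlin_X_inr_mul_right,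
      shift_zero_index, shift_succ_index]
    ring

theorem leibniz_Nlin_quadratic (lam : ℂ) (a : Fin n) (k : ℕ) (φ ψ : PolA n) :
    let L := pblin n (X (Sum.inl a) * ∑ k, X (Sum.inl k) * X (Sum.inr k))
    let K := correction lam (pderiv (Sum.inr a)).toLinearMap
    L (Nlin n k φ ψ) + K (shift (Nlin n) k φ ψ) =
      Nlin n k (L φ) ψ + Nlin n k φ (L ψ) +
        (shift (Nlin n) k (K φ) ψ + shift (Nlin n) k φ (K ψ)) := by
  have euler_terms := Finset.sum_congr rfl fun i (_ : i ∈ Finset.univ) =>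
    leibniz_Nlin_quadratic_summand a i k φ ψ
  have pderiv_shift_Nlin : pderiv (Sum.inr a) (shift (Nlin n) k φ ψ) =
      shift (Nlin n) k (pderiv (Sum.inr a) φ) ψ + shift (Nlin n) k φ (pderiv (Sum.inr a) ψ) := by
    cases k <;> simp [pderiv_Nlin]
  simp only [pblin_quadratic, correction_apply_eq_Elin, Derivation.coeFn_coe, Elin_apply, map_sum,
    map_add, map_neg, map_smul, LinearMap.sum_apply, LinearMap.add_apply, LinearMap.neg_apply,
    LinearMap.smul_apply, pderiv_shift_Nlin, smul_add]
  simp only [pderiv_shift_Nlin, Finset.sum_sub_distrib, Finset.sum_add_distrib, map_sub, map_add,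
    mul_add, LinearMap.sub_apply] at euler_terms ⊢
  linear_combination euler_terms

theorem isProjectiveSymmetry_quadratic (lam : ℂ) (a : Fin n) :
    IsProjectiveSymmetry lam (pblin n (X (Sum.inl a) * ∑ k, X (Sum.inl k) * X (Sum.inr k)))
      (pderiv (Sum.inr a)).toLinearMap where
  lowersXiDegree := lowersXiDegree_pblin (Submodule.subset_span (.inr ⟨a, rfl⟩))
  lowersXiDegree_eta := lowersXiDegree_pderiv_inr a
  commute_Dlin_eta := LinearMap.ext (Dlin_pderiv (Sum.inr a))
  Dlin_apply := Dlin_pblin_quadratic a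
  leibniz_Nlin := leibniz_Nlin_quadratic lam a

theorem pb_cE_of_mem_momSpan {μ : PolA n} (hμ : μ ∈ momSpan n) (c : ℕ → ℂ) (φ : PolA n) :
    pb μ (cE c φ) = cE c (pb μ φ) := by
  simpa only [pblin_apply, add_zero] using (lowersXiDegree_pblin hμ).apply_cE c φ

theorem pb_C_of_mem_momSpan (lam : ℂ) (p : ℕ) {μ : PolA n} (hμ : μ ∈ momSpan n) (φ ψ : PolA n) :
    pb μ (C n lam p φ ψ) = C n lam p (pb μ φ) ψ + C n lam p φ (pb μ ψ) := by
  simp only [← pblin_apply]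
  induction hμ using Submodule.span_induction with
  | mem μ hμ =>
    obtain (⟨i, rfl⟩ | ⟨⟨i, j⟩, rfl⟩) | ⟨a, rfl⟩ := hμ
    · exact (isProjectiveSymmetry_translation lam i).C_leibniz p φ ψ
    · exact (isProjectiveSymmetry_linear lam i j).C_leibniz p φ ψ
    · exact (isProjectiveSymmetry_quadratic lam a).C_leibniz p φ ψ
  | zero => simp [C_eq_transportedProduct]
  | add μ ν _ _ hμ hν =>
    simp only [C_eq_transportedProduct, map_add, LinearMap.add_apply, Pi.add_apply] at hμ hν ⊢
    rw [hμ, hν]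
    abel
  | smul r μ _ hμ =>
    simp only [C_eq_transportedProduct, map_smul, LinearMap.smul_apply, Pi.smul_apply] at hμ ⊢
    rw [hμ, smul_add]

end MomentumFunctions

end LO

theorem stmt_13_general (n : ℕ) (lam : ℂ) (p : ℕ) (t s₁ s₂ : ℕ → ℂ) :
    (∀ μ ∈ LO.momSpan n, ∀ φ ψ : PolA n,
        LO.pb μ (LO.cE t (LO.C n lam p (LO.cE s₁ φ) (LO.cE s₂ ψ))) =
          LO.cE t (LO.C n lam p (LO.cE s₁ (LO.pb μ φ)) (LO.cE s₂ ψ)) +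
          LO.cE t (LO.C n lam p (LO.cE s₁ φ) (LO.cE s₂ (LO.pb μ ψ)))) ∧
    (∀ (j k : ℤ) (φ ψ : PolA n), LO.IsXiHomog j φ → LO.IsXiHomog k ψ →
        LO.IsXiHomog (j + k - p) (LO.cE t (LO.C n lam p (LO.cE s₁ φ) (LO.cE s₂ ψ)))) := by
  refine ⟨fun μ hμ φ ψ => ?_, fun j k φ ψ hφ hψ => (((hφ.cE s₁).C lam p (hψ.cE s₂)).cE t)⟩
  simp only [LO.pb_cE_of_mem_momSpan hμ, LO.pb_C_of_mem_momSpan lam p hμ]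
  exact map_add (LO.cElin t) _ _

/-- Theorem 5, invariance and homogeneity: for `n` odd and `p ≥ 1`,
`Z_p(φ,ψ) = T_p(C^{1/2}_p(S_p φ, S_p ψ))` is infinitesimally `sl_{n+1}(ℝ)`-invariant
and has total homogeneous degree `−p`. -/
theorem stmt_13 (n : ℕ) (hn : Odd n) (p : ℕ) (hp : 1 ≤ p) :
    (∀ μ ∈ LO.momSpan n, ∀ φ ψ : PolA n,
        LO.pb μ (LO.Tp n p (LO.C n (1 / 2) p (LO.Sp n p φ) (LO.Sp n p ψ))) =
          LO.Tp n p (LO.C n (1 / 2) p (LO.Sp n p (LO.pb μ φ)) (LO.Sp n p ψ)) +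
          LO.Tp n p (LO.C n (1 / 2) p (LO.Sp n p φ) (LO.Sp n p (LO.pb μ ψ)))) ∧
    (∀ (j k : ℕ) (φ ψ : PolA n), LO.IsXiHomog (j : ℤ) φ → LO.IsXiHomog (k : ℤ) ψ →
        LO.IsXiHomog ((j : ℤ) + (k : ℤ) - (p : ℤ))
          (LO.Tp n p (LO.C n (1 / 2) p (LO.Sp n p φ) (LO.Sp n p ψ)))) := by
  obtain ⟨invariance, homogeneity⟩ :=
    stmt_13_general n (1 / 2) p (LO.TScal n p) (LO.SScal n p) (LO.SScal n p)
  exact ⟨invariance, fun j k => homogeneity j k⟩
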